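/- arXiv:1002.2982 — 3 statements merged into one kernel-verified Lean document; each statement's English description precedes it below -/
import Mathlib

section
/- Let n ≥ 1, r > 0, ε > 0, and let f : B_r(0) ⊆ ℝⁿ → ℝ be a smooth function with f(0) = 0, Df(0) = 0, and A := −(1/2)·D²f(0) satisfying ⟨x, Ax⟩ ≥ (ε/2)‖x‖² for all x ∈ ℝⁿ. Let (q_m) ⊆ B_r(0) converge to 0 and let (s_m) be positive reals converging to 0 such that |f(q_m)| ≤ s_m for all m. Then limsup_{m→∞} ‖q_m‖²/s_m ≤ 2/ε. In particular the rescaled points q̂_m := q_m/√s_m are bounded and admit a subsequence converging to some q̂₀ ∈ ℝⁿ with ⟨q̂₀, A q̂₀⟩ ≤ 1. -/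
open scoped RealInnerProductSpace
open Metric Filter Topology

/-!
Taylor's formula at `0` reads `f x = -⟪x, A x⟫ + o(‖x‖²)`, so `|f (q m)| ≤ s m` gives
`ε / 2 * ‖q m‖² ≤ ⟪q m, A (q m)⟫ ≤ s m + o(‖q m‖²)`. Absorbing the error term into the left-hand
side yields `‖q m‖² = O(s m)`, which improves the error to `o(s m)`. Dividing by `s m`, the rescaled
points satisfy `ε / 2 * ‖q̂ m‖² ≤ ⟪q̂ m, A (q̂ m)⟫ ≤ 1 + o(1)`, and all three claims follow from
these two inequalities and compactness.
-/

section

open Asymptotics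

section Taylor

theorem eventually_hasFDerivAt_and_hasFDerivAt_fderiv_of_contDiffAt_two {𝕜 E F : Type*}
    [NontriviallyNormedField 𝕜] [NormedAddCommGroup E] [NormedSpace 𝕜 E] [NormedAddCommGroup F]
    [NormedSpace 𝕜 F] {f : E → F} {x : E} (hf : ContDiffAt 𝕜 2 f x) :
    (∀ᶠ y in 𝓝 x, HasFDerivAt f (fderiv 𝕜 f y) y) ∧
      HasFDerivAt (fderiv 𝕜 f) (fderiv 𝕜 (fderiv 𝕜 f) x) x :=
  ⟨(hf.eventually (by simp)).mono fun _ hy => (hy.differentiableAt two_ne_zero).hasFDerivAt,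
    ((hf.fderiv_right (m := 1) one_add_one_eq_two.le).differentiableAt one_ne_zero).hasFDerivAt⟩

variable {E F : Type*} [NormedAddCommGroup E] [NormedSpace ℝ E] [NormedAddCommGroup F]
  [NormedSpace ℝ F]

theorem isLittleO_sub_pow_succ_of_eventually_hasFDerivAt {g : E → F} {g' : E → E →L[ℝ] F} {x₀ : E}
    {k : ℕ} (hg : ∀ᶠ x in 𝓝 x₀, HasFDerivAt g (g' x) x)
    (hg' : g' =o[𝓝 x₀] fun x => ‖x - x₀‖ ^ k) :
    (fun x => g x - g x₀) =o[𝓝 x₀] fun x => ‖x - x₀‖ ^ (k + 1) := by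
  obtain ⟨δ, hδ, hball⟩ := Metric.eventually_nhds_iff_ball.1 hg
  have hnhds : 𝓝[ball x₀ δ] x₀ = 𝓝 x₀ := nhdsWithin_eq_nhds.2 (ball_mem_nhds x₀ hδ)
  simpa only [hnhds] using (convex_ball x₀ δ).isLittleO_pow_succ (mem_ball_self hδ)
    (fun x hx => (hball x hx).hasFDerivWithinAt) (hnhds.symm ▸ hg')

theorem isLittleO_taylor_two {f : E → F} {f' : E → E →L[ℝ] F} {f'' : E →L[ℝ] E →L[ℝ] F} {x₀ : E}
    (hf : ∀ᶠ x in 𝓝 x₀, HasFDerivAt f (f' x) x) (hf' : HasFDerivAt f' f'' x₀) :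
    (fun x => f x - f x₀ - f' x₀ (x - x₀) - (1 / 2 : ℝ) • f'' (x - x₀) (x - x₀))
      =o[𝓝 x₀] fun x => ‖x - x₀‖ ^ 2 := by
  have hsymm : ∀ v w, f'' v w = f'' w v := second_derivative_symmetric_of_eventually hf hf'
  have hremainder : ∀ᶠ x in 𝓝 x₀, HasFDerivAt
      (fun x => f x - f' x₀ (x - x₀) - (1 / 2 : ℝ) • f'' (x - x₀) (x - x₀))
      (f' x - f' x₀ - f'' (x - x₀)) x := by
    filter_upwards [hf] with x hx
    have hsub : HasFDerivAt (fun y => y - x₀) (ContinuousLinearMap.id ℝ E) x :=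
      (hasFDerivAt_id x).sub_const x₀
    refine ((hx.sub ((f' x₀).hasFDerivAt.comp x hsub)).sub
      ((f''.hasFDerivAt_of_bilinear hsub hsub).const_smul (1 / 2 : ℝ))).congr_fderiv ?_
    ext v
    have hhalf : (1 / 2 : ℝ) • (f'' (x - x₀) v + f'' v (x - x₀)) = f'' (x - x₀) v := by
      rw [hsymm v]
      module
    simpa using hhalf
  have hderiv : (fun x => f' x - f' x₀ - f'' (x - x₀)) =o[𝓝 x₀] fun x => ‖x - x₀‖ ^ 1 := by
    simpa only [pow_one] using hf'.isLittleO.norm_right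
  refine (isLittleO_sub_pow_succ_of_eventually_hasFDerivAt hremainder hderiv).congr_left fun x => ?_
  simp only [sub_self, map_zero, smul_zero, sub_zero]
  abel

end Taylor

section RealAsymptotics

variable {ι : Type*} {l : Filter ι} {u v : ι → ℝ} {c : ℝ}

theorem isBigO_of_mul_le_add_isLittleO {e : ι → ℝ} (hc : 0 < c) (hu : ∀ᶠ i in l, 0 ≤ u i)
    (huv : ∀ᶠ i in l, c * u i ≤ v i + e i) (he : e =o[l] u) : u =O[l] v := by
  refine IsBigO.of_bound (2 / c) ?_
  filter_upwards [hu, huv, he.def (half_pos hc)] with i hui huvi hei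
  have hev : e i ≤ c / 2 * u i := by
    simpa only [Real.norm_of_nonneg hui] using (Real.le_norm_self _).trans hei
  have habsorb : c / 2 * u i ≤ v i := by linarith
  calc ‖u i‖ = 2 / c * (c / 2 * u i) := by rw [Real.norm_of_nonneg hui]; field_simp
    _ ≤ 2 / c * ‖v i‖ := by gcongr; exact habsorb.trans (Real.le_norm_self _)

theorem limsup_le_div_of_mul_le_of_tendsto [l.NeBot] {a : ℝ} (hc : 0 < c)
    (hu : IsBoundedUnder (· ≥ ·) l u) (huv : ∀ᶠ i in l, c * u i ≤ v i) (hv : Tendsto v l (𝓝 a)) :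
    limsup u l ≤ a / c := by
  have hlim : Tendsto (fun i => v i / c) l (𝓝 (a / c)) := hv.div_const c
  rw [← hlim.limsup_eq]
  refine limsup_le_limsup ?_ hu.isCoboundedUnder_le hlim.isBoundedUnder_le
  filter_upwards [huv] with i hi
  rwa [le_div_iff₀' hc]

end RealAsymptotics

section PerturbedCoercive

variable {E ι : Type*} [SeminormedAddCommGroup E] {l : Filter ι} {f Q : E → ℝ} {q : ι → E}
  {s : ι → ℝ} {c : ℝ}

theorem isBigO_norm_sq_of_isLittleO_add_coercive (hc : 0 < c) (hQ : ∀ x, c * ‖x‖ ^ 2 ≤ Q x)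
    (hfQ : (fun x => f x + Q x) =o[𝓝 0] fun x => ‖x‖ ^ 2) (hq : Tendsto q l (𝓝 0))
    (hfq : ∀ i, -s i ≤ f (q i)) : (fun i => ‖q i‖ ^ 2) =O[l] s := by
  refine isBigO_of_mul_le_add_isLittleO hc (.of_forall fun i => by positivity)
    (.of_forall fun i => ?_) (hfQ.comp_tendsto hq)
  simp only [Function.comp_apply]
  linarith [hQ (q i), hfq i]

theorem exists_tendsto_one_div_le_of_isLittleO_add
    (hfQ : (fun x => f x + Q x) =o[𝓝 0] fun x => ‖x‖ ^ 2) (hq : Tendsto q l (𝓝 0))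
    (hs : ∀ i, 0 < s i) (hfq : ∀ i, -s i ≤ f (q i)) (hqs : (fun i => ‖q i‖ ^ 2) =O[l] s) :
    ∃ η : ι → ℝ, Tendsto η l (𝓝 1) ∧ ∀ i, Q (q i) / s i ≤ η i := by
  have herror : (fun i => f (q i) + Q (q i)) =o[l] s := (hfQ.comp_tendsto hq).trans_isBigO hqs
  refine ⟨fun i => 1 + (f (q i) + Q (q i)) / s i, ?_, fun i => ?_⟩
  · simpa only [add_zero] using herror.tendsto_div_nhds_zero.const_add 1
  · calc Q (q i) / s i ≤ (s i + (f (q i) + Q (q i))) / s i :=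
          div_le_div_of_nonneg_right (by linarith [hfq i]) (hs i).le
      _ = 1 + (f (q i) + Q (q i)) / s i := by rw [add_div, div_self (hs i).ne']

end PerturbedCoercive

section ParabolicRescaling

variable {E : Type*} [NormedAddCommGroup E] [NormedSpace ℝ E]

theorem norm_inv_sqrt_smul_sq {t : ℝ} (ht : 0 ≤ t) (x : E) : ‖(√t)⁻¹ • x‖ ^ 2 = ‖x‖ ^ 2 / t := by
  rw [norm_smul, mul_pow, norm_inv, inv_pow, Real.norm_eq_abs, sq_abs, Real.sq_sqrt ht,
    div_eq_inv_mul]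

theorem bilin_inv_sqrt_smul_self (A : E →L[ℝ] E →L[ℝ] ℝ) {t : ℝ} (ht : 0 ≤ t) (x : E) :
    A ((√t)⁻¹ • x) ((√t)⁻¹ • x) = A x x / t := by
  simp only [map_smul, smul_apply, smul_eq_mul]
  rw [← mul_assoc, ← mul_inv, Real.mul_self_sqrt ht, div_eq_inv_mul]

theorem exists_norm_inv_sqrt_smul_le {q : ℕ → E} {s : ℕ → ℝ} (hs : ∀ m, 0 < s m)
    (hqs : (fun m => ‖q m‖ ^ 2) =O[atTop] s) : ∃ C : ℝ, ∀ m, ‖(√(s m))⁻¹ • q m‖ ≤ C := by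
  obtain ⟨D, -, hD⟩ := bound_of_isBigO_nat_atTop hqs
  refine ⟨√D, fun m => Real.le_sqrt_of_sq_le ?_⟩
  rw [norm_inv_sqrt_smul_sq (hs m).le, div_le_iff₀ (hs m)]
  simpa only [norm_pow, norm_norm, Real.norm_of_nonneg (hs m).le] using hD (hs m).ne'

end ParabolicRescaling

theorem parabolic_rescaled_points_bounded_general {E : Type*} [NormedAddCommGroup E]
    [NormedSpace ℝ E] [FiniteDimensional ℝ E] {ε : ℝ} (hε : 0 < ε) {f : E → ℝ}
    {f' : E → E →L[ℝ] ℝ} {f'' : E →L[ℝ] E →L[ℝ] ℝ}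
    (hf : ∀ᶠ x in 𝓝 0, HasFDerivAt f (f' x) x) (hf' : HasFDerivAt f' f'' 0)
    (hf0 : f 0 = 0) (hf'0 : f' 0 = 0) (hf'' : ∀ x, ε / 2 * ‖x‖ ^ 2 ≤ -(1 / 2) * f'' x x)
    {q : ℕ → E} (hq : Tendsto q atTop (𝓝 0)) {s : ℕ → ℝ} (hs : ∀ m, 0 < s m)
    (hfq : ∀ m, -s m ≤ f (q m)) :
    limsup (fun m => ‖q m‖ ^ 2 / s m) atTop ≤ 2 / ε ∧
      (∃ C : ℝ, ∀ m, ‖(√(s m))⁻¹ • q m‖ ≤ C) ∧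
      ∃ (ψ : ℕ → ℕ) (q₀ : E), StrictMono ψ ∧
        Tendsto (fun m => (√(s (ψ m)))⁻¹ • q (ψ m)) atTop (𝓝 q₀) ∧ -(1 / 2) * f'' q₀ q₀ ≤ 1 := by
  have htaylor : (fun x => f x + -(1 / 2) * f'' x x) =o[𝓝 0] fun x => ‖x‖ ^ 2 := by
    simpa [hf0, hf'0, sub_eq_add_neg] using isLittleO_taylor_two hf hf'
  have hqs : (fun m => ‖q m‖ ^ 2) =O[atTop] s :=
    isBigO_norm_sq_of_isLittleO_add_coercive (half_pos hε) hf'' htaylor hq hfq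
  obtain ⟨η, hη, hle⟩ := exists_tendsto_one_div_le_of_isLittleO_add htaylor hq hs hfq hqs
  obtain ⟨C, hC⟩ := exists_norm_inv_sqrt_smul_le hs hqs
  refine ⟨?_, ⟨C, hC⟩, ?_⟩
  · rw [← one_div_div ε 2]
    refine limsup_le_div_of_mul_le_of_tendsto (half_pos hε)
      (isBoundedUnder_of ⟨0, fun m => div_nonneg (sq_nonneg _) (hs m).le⟩)
      (.of_forall fun m => ?_) hη
    rw [← mul_div_assoc]
    exact (div_le_div_of_nonneg_right (hf'' (q m)) (hs m).le).trans (hle m)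
  · obtain ⟨q₀, -, ψ, hψ, hlim⟩ := tendsto_subseq_of_bounded
      (isBounded_closedBall (x := 0) (r := C)) fun m => mem_closedBall_zero_iff.2 (hC m)
    have hcont : Continuous fun x => -(1 / 2) * f'' x x := by fun_prop
    refine ⟨ψ, q₀, hψ, hlim, le_of_tendsto_of_tendsto' ((hcont.tendsto q₀).comp hlim)
      (hη.comp hψ.tendsto_atTop) fun m => ?_⟩
    simpa only [Function.comp_apply, bilin_inv_sqrt_smul_self f'' (hs (ψ m)).le, mul_div_assoc]
      using hle (ψ m)

end

/-- Let `f : B_r(0) ⊆ ℝⁿ → ℝ` be smooth with `f(0) = 0`, `Df(0) = 0`,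
and `A := -(1/2)·D²f(0)` satisfying `⟪x, A x⟫ ≥ (ε/2)‖x‖²`.  If `q_m → 0` in `B_r(0)`,
`s_m > 0` tends to `0`, and `|f(q_m)| ≤ s_m`, then `limsup ‖q_m‖²/s_m ≤ 2/ε`; in
particular the rescaled points `q̂_m = q_m/√s_m` are bounded and admit a subsequence
converging to some `q̂₀` with `⟪q̂₀, A q̂₀⟫ ≤ 1`. -/
theorem parabolic_rescaled_points_bounded (n : ℕ) (hn : 1 ≤ n) (r ε : ℝ)
    (hr : 0 < r) (hε : 0 < ε)
    (f : EuclideanSpace ℝ (Fin n) → ℝ)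
    (hf : ContDiffOn ℝ (⊤ : ℕ∞) f (ball 0 r))
    (hf0 : f 0 = 0) (hDf : fderiv ℝ f 0 = 0)
    (A : EuclideanSpace ℝ (Fin n) →ₗ[ℝ] EuclideanSpace ℝ (Fin n))
    (hA : ∀ x y : EuclideanSpace ℝ (Fin n),
      ⟪x, A y⟫ = -(1 / 2) * iteratedFDeriv ℝ 2 f 0 ![x, y])
    (hAε : ∀ x : EuclideanSpace ℝ (Fin n), ε / 2 * ‖x‖ ^ 2 ≤ ⟪x, A x⟫)
    (q : ℕ → EuclideanSpace ℝ (Fin n)) (hqmem : ∀ m, q m ∈ ball (0 : EuclideanSpace ℝ (Fin n)) r)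
    (hq0 : Tendsto q atTop (𝓝 0))
    (s : ℕ → ℝ) (hs : ∀ m, 0 < s m) (hs0 : Tendsto s atTop (𝓝 0))
    (hfq : ∀ m, |f (q m)| ≤ s m) :
    Filter.limsup (fun m => ‖q m‖ ^ 2 / s m) atTop ≤ 2 / ε ∧
      (∃ C : ℝ, ∀ m, ‖(Real.sqrt (s m))⁻¹ • q m‖ ≤ C) ∧
      ∃ (ψ : ℕ → ℕ) (q₀ : EuclideanSpace ℝ (Fin n)), StrictMono ψ ∧
        Tendsto (fun m => (Real.sqrt (s (ψ m)))⁻¹ • q (ψ m)) atTop (𝓝 q₀) ∧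
        ⟪q₀, A q₀⟫ ≤ 1 := by
  obtain ⟨hdiff, hdiff'⟩ := eventually_hasFDerivAt_and_hasFDerivAt_fderiv_of_contDiffAt_two
    ((hf.contDiffAt (ball_mem_nhds 0 hr)).of_le (WithTop.coe_le_coe.2 le_top))
  simp only [hA, iteratedFDeriv_two_apply] at hAε ⊢
  exact parabolic_rescaled_points_bounded_general hε hdiff hdiff' hf0 hDf hAε hq0 hs
    fun m => neg_le_of_abs_le (hfq m)
end

section
/- Let n ≥ 1, r > 0, C > 0. Let (s_m) be positive reals converging to 0, let (q_m) ⊆ ℝⁿ be such that q̂_m := q_m/√s_m converges to some q̂₀ ∈ ℝⁿ, and let (B_m) be symmetric n×n real matrices converging to a symmetric matrix B₀. For each m let φ_m : B_r(0) ⊆ ℝⁿ → ℝ be a function satisfying φ_m(x) = s_m + ⟨x − q_m, B_m (x − q_m)⟩ + R_m(x) with |R_m(x)| ≤ C‖x‖³ for all x ∈ B_r(0). Define φ̂_m(x) = φ_m(√s_m·x)/s_m for ‖x‖ < r/√s_m. Then φ̂_m converges uniformly on every compact subset of ℝⁿ to the paraboloid function φ̂₀(x) := 1 + ⟨x − q̂₀,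 B₀ (x − q̂₀)⟩. -/
open scoped RealInnerProductSpace
open Metric Filter Topology

/-!
The rescaling `φ ↦ φ (√s • ·) / s` maps the paraboloid of height `s` over `q` to the paraboloid of
height `1` over `q / √s` with the same quadratic part, and shrinks a cubic error `C ‖x‖ ^ 3` to
`C √s ‖x‖ ^ 3`, which vanishes locally uniformly as `s → 0`. What remains is the convergence of
paraboloids: by the uniform boundedness principle, pointwise convergence of the operators `B m`
is enough for `B m (v m)` to converge whenever `v m` does.
-/

section LocallyUniformConvergence

variable {ι X Y : Type*} [TopologicalSpace X]

theorem tendstoLocallyUniformly_of_forall_tendsto_prod_nhds [UniformSpace Y] {F : ι → X → Y}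
    {f : X → Y} {l : Filter ι} (hf : Continuous f)
    (hF : ∀ x, Tendsto (fun p : ι × X => F p.1 p.2) (l ×ˢ 𝓝 x) (𝓝 (f x))) :
    TendstoLocallyUniformly F f l :=
  tendstoLocallyUniformly_iff_forall_tendsto.2 fun x =>
    (((hf.tendsto x).comp tendsto_snd).prodMk_nhds (hF x)).mono_right (nhds_le_uniformity (f x))

theorem exists_forall_ge_dist_lt_of_tendstoLocallyUniformly [PseudoMetricSpace Y] [Preorder ι]
    [IsDirectedOrder ι] [Nonempty ι] {F : ι → X → Y} {f : X → Y}
    (hF : TendstoLocallyUniformly F f atTop) {Q : Set X} (hQ : IsCompact Q) {ε : ℝ} (hε : 0 < ε) :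
    ∃ N, ∀ m ≥ N, ∀ x ∈ Q, dist (F m x) (f x) < ε := by
  have hunif : TendstoUniformlyOn F f atTop Q :=
    (tendstoLocallyUniformlyOn_iff_tendstoUniformlyOn_of_compact hQ).1 hF.tendstoLocallyUniformlyOn
  simpa only [dist_comm] using eventually_atTop.1 (Metric.tendstoUniformlyOn_iff.1 hunif ε hε)

end LocallyUniformConvergence

section StrongOperatorConvergence

variable {𝕜 E F : Type*} [NontriviallyNormedField 𝕜] [NormedAddCommGroup E] [NormedSpace 𝕜 E]
  [NormedAddCommGroup F] [NormedSpace 𝕜 F] [CompleteSpace E]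

theorem exists_opNorm_le_of_forall_tendsto_apply {B : ℕ → E →L[𝕜] F} {B₀ : E → F}
    (hB : ∀ x, Tendsto (fun m => B m x) atTop (𝓝 (B₀ x))) : ∃ K, ∀ m, ‖B m‖ ≤ K := by
  refine banach_steinhaus fun x => ?_
  obtain ⟨K, hK⟩ := (hB x).norm.bddAbove_range
  exact ⟨K, fun m => hK (Set.mem_range_self m)⟩

theorem tendsto_apply_of_forall_tendsto_apply {B : ℕ → E →L[𝕜] F} {B₀ : E → F}
    (hB : ∀ x, Tendsto (fun m => B m x) atTop (𝓝 (B₀ x))) {α : Type*} {l : Filter α}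
    {k : α → ℕ} {v : α → E} {x : E} (hk : Tendsto k l atTop) (hv : Tendsto v l (𝓝 x)) :
    Tendsto (fun a => B (k a) (v a)) l (𝓝 (B₀ x)) := by
  obtain ⟨K, hK⟩ := exists_opNorm_le_of_forall_tendsto_apply hB
  have hbound : Tendsto (fun a => K * ‖v a - x‖) l (𝓝 0) := by
    simpa using (tendsto_iff_norm_sub_tendsto_zero.1 hv).const_mul K
  have hdiff : Tendsto (fun a => B (k a) (v a - x)) l (𝓝 0) :=
    squeeze_zero_norm (fun a => (B (k a)).le_of_opNorm_le (hK (k a)) _) hbound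
  simpa using hdiff.add ((hB x).comp hk)

end StrongOperatorConvergence

section ParabolicRescaling

variable {E : Type*} [NormedAddCommGroup E] [NormedSpace ℝ E]

/-- The parabolic blow-up `φ̂` of a function `φ` at scale `s`: lengths in the domain are magnified
by `1 / √s` and heights by `1 / s`. Only `0 < s` is meaningful. -/
noncomputable def parabolicRescaling (s : ℝ) (φ : E → ℝ) (x : E) : ℝ :=
  φ (√s • x) / s

theorem abs_parabolicRescaling_sub_le {s C : ℝ} (hs : 0 < s) {φ ψ : E → ℝ} {x : E}
    (h : |φ (√s • x) - ψ (√s • x)| ≤ C * ‖√s • x‖ ^ 3) :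
    |parabolicRescaling s φ x - parabolicRescaling s ψ x| ≤ C * (√s * ‖x‖ ^ 3) := by
  have hcube : C * ‖√s • x‖ ^ 3 = C * (√s * ‖x‖ ^ 3) * s := by
    rw [norm_smul, Real.norm_of_nonneg (Real.sqrt_nonneg s)]
    linear_combination C * √s * ‖x‖ ^ 3 * Real.sq_sqrt hs.le
  rw [parabolicRescaling, parabolicRescaling, ← sub_div, abs_div, abs_of_pos hs,
    div_le_iff₀ hs, ← hcube]
  exact h

theorem tendstoLocallyUniformly_parabolicRescaling_sub {ι : Type*} {l : Filter ι} {s : ι → ℝ}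
    {r C : ℝ} (hr : 0 < r) (hs : ∀ i, 0 < s i) (hs0 : Tendsto s l (𝓝 0)) {φ ψ : ι → E → ℝ}
    (h : ∀ i, ∀ x ∈ ball (0 : E) r, |φ i x - ψ i x| ≤ C * ‖x‖ ^ 3) :
    TendstoLocallyUniformly
      (fun i => parabolicRescaling (s i) (φ i) - parabolicRescaling (s i) (ψ i)) 0 l := by
  refine tendstoLocallyUniformly_of_forall_tendsto_prod_nhds continuous_const fun x => ?_
  have hsqrt : Tendsto (fun p : ι × E => √(s p.1)) (l ×ˢ 𝓝 x) (𝓝 0) := by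
    simpa [Function.comp_def] using hs0.sqrt.comp tendsto_fst
  have hsnd : Tendsto (fun p : ι × E => p.2) (l ×ˢ 𝓝 x) (𝓝 x) := tendsto_snd
  have hscaled : Tendsto (fun p : ι × E => √(s p.1) • p.2) (l ×ˢ 𝓝 x) (𝓝 0) := by
    simpa using hsqrt.smul hsnd
  have hbound : Tendsto (fun p : ι × E => C * (√(s p.1) * ‖p.2‖ ^ 3)) (l ×ˢ 𝓝 x) (𝓝 0) := by
    simpa using (hsqrt.mul (hsnd.norm.pow 3)).const_mul C
  refine squeeze_zero_norm' ?_ hbound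
  filter_upwards [hscaled.eventually_mem (ball_mem_nhds 0 hr)] with p hp
  exact abs_parabolicRescaling_sub_le (hs p.1) (h p.1 _ hp)

end ParabolicRescaling

section Paraboloid

variable {E : Type*} [NormedAddCommGroup E] [InnerProductSpace ℝ E]

/-- The paraboloid of height `h` centered over `q` with quadratic part `⟪·, B ·⟫`, encoded as
the function whose graph it is; both the model of `φ m` and the limit `φ̂₀` are of this form. -/
noncomputable def paraboloid (h : ℝ) (q : E) (B : E →L[ℝ] E) (x : E) : ℝ :=
  h + ⟪x - q, B (x - q)⟫

theorem continuous_paraboloid (h : ℝ) (q : E) (B : E →L[ℝ] E) : Continuous (paraboloid h q B) := by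
  unfold paraboloid
  fun_prop

theorem parabolicRescaling_paraboloid {s : ℝ} (hs : 0 < s) (h : ℝ) (q : E) (B : E →L[ℝ] E) :
    parabolicRescaling s (paraboloid h q B) = paraboloid (h / s) ((√s)⁻¹ • q) B := by
  ext x
  have hcenter : √s • x - q = √s • (x - (√s)⁻¹ • q) := by
    rw [smul_sub, smul_inv_smul₀ (Real.sqrt_pos.2 hs).ne']
  rw [parabolicRescaling, paraboloid, paraboloid, hcenter, map_smul, real_inner_smul_left,
    real_inner_smul_right, ← mul_assoc, Real.mul_self_sqrt hs.le, add_div,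
    mul_div_cancel_left₀ _ hs.ne']

theorem tendstoLocallyUniformly_paraboloid [CompleteSpace E] {h : ℕ → ℝ} {h₀ : ℝ}
    {q : ℕ → E} {q₀ : E} {B : ℕ → E →L[ℝ] E} {B₀ : E →L[ℝ] E}
    (hh : Tendsto h atTop (𝓝 h₀)) (hq : Tendsto q atTop (𝓝 q₀))
    (hB : ∀ x, Tendsto (fun m => B m x) atTop (𝓝 (B₀ x))) :
    TendstoLocallyUniformly (fun m => paraboloid (h m) (q m) (B m)) (paraboloid h₀ q₀ B₀)
      atTop := by
  refine tendstoLocallyUniformly_of_forall_tendsto_prod_nhds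
    (continuous_paraboloid h₀ q₀ B₀) fun x => ?_
  have hsub : Tendsto (fun p : ℕ × E => p.2 - q p.1) (atTop ×ˢ 𝓝 x) (𝓝 (x - q₀)) :=
    tendsto_snd.sub (hq.comp tendsto_fst)
  exact (hh.comp tendsto_fst).add
    (hsub.inner (tendsto_apply_of_forall_tendsto_apply hB tendsto_fst hsub))

theorem parabolic_limit_of_tangent_hyperplanes_general [CompleteSpace E] {r C : ℝ} (hr : 0 < r)
    {s : ℕ → ℝ} (hs : ∀ m, 0 < s m) (hs0 : Tendsto s atTop (𝓝 0)) {q : ℕ → E} {q₀ : E}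
    (hq : Tendsto (fun m => (√(s m))⁻¹ • q m) atTop (𝓝 q₀))
    {B : ℕ → E →L[ℝ] E} {B₀ : E →L[ℝ] E}
    (hB : ∀ x, Tendsto (fun m => B m x) atTop (𝓝 (B₀ x))) {φ : ℕ → E → ℝ}
    (hφ : ∀ m, ∀ x ∈ ball (0 : E) r, |φ m x - paraboloid (s m) (q m) (B m) x| ≤ C * ‖x‖ ^ 3) :
    TendstoLocallyUniformly (fun m => parabolicRescaling (s m) (φ m)) (paraboloid 1 q₀ B₀)
      atTop := by
  have hmodel : ∀ m, parabolicRescaling (s m) (paraboloid (s m) (q m) (B m)) =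
      paraboloid 1 ((√(s m))⁻¹ • q m) (B m) := fun m => by
    rw [parabolicRescaling_paraboloid (hs m), div_self (hs m).ne']
  have hsum := (tendstoLocallyUniformly_parabolicRescaling_sub hr hs hs0 hφ).add
    (tendstoLocallyUniformly_paraboloid (tendsto_const_nhds (x := 1)) hq hB)
  simpa only [← hmodel, Pi.add_def, Pi.sub_def, sub_add_cancel, zero_add] using hsum

end Paraboloid

/-- Parabolic limit of tangent geodesic hyperplanes.  Suppose
`s_m > 0` tends to `0`, the rescaled base points `q̂_m = q_m/√s_m` converge to `q̂₀`,
symmetric operators `B_m` converge to `B₀`, and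
`φ_m(x) = s_m + ⟪x - q_m, B_m (x - q_m)⟫ + R_m(x)` with `|R_m(x)| ≤ C‖x‖³` on `B_r(0)`.
Then `φ̂_m(x) = φ_m(√s_m·x)/s_m` converges uniformly on every compact set to the
paraboloid `φ̂₀(x) = 1 + ⟪x - q̂₀, B₀ (x - q̂₀)⟫`. -/
theorem parabolic_limit_of_tangent_hyperplanes (n : ℕ) (hn : 1 ≤ n) (r C : ℝ)
    (hr : 0 < r) (hC : 0 < C)
    (s : ℕ → ℝ) (hs : ∀ m, 0 < s m) (hs0 : Tendsto s atTop (𝓝 0))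
    (q : ℕ → EuclideanSpace ℝ (Fin n)) (q₀ : EuclideanSpace ℝ (Fin n))
    (hq : Tendsto (fun m => (Real.sqrt (s m))⁻¹ • q m) atTop (𝓝 q₀))
    (B : ℕ → EuclideanSpace ℝ (Fin n) →ₗ[ℝ] EuclideanSpace ℝ (Fin n))
    (B₀ : EuclideanSpace ℝ (Fin n) →ₗ[ℝ] EuclideanSpace ℝ (Fin n))
    (hBsymm : ∀ m, ∀ x y : EuclideanSpace ℝ (Fin n), ⟪B m x, y⟫ = ⟪x, B m y⟫)
    (hB₀symm : ∀ x y : EuclideanSpace ℝ (Fin n), ⟪B₀ x, y⟫ = ⟪x, B₀ y⟫)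
    (hB : ∀ x : EuclideanSpace ℝ (Fin n), Tendsto (fun m => B m x) atTop (𝓝 (B₀ x)))
    (φ : ℕ → EuclideanSpace ℝ (Fin n) → ℝ)
    (hφ : ∀ m, ∀ x ∈ ball (0 : EuclideanSpace ℝ (Fin n)) r,
      |φ m x - (s m + ⟪x - q m, B m (x - q m)⟫)| ≤ C * ‖x‖ ^ 3) :
    ∀ Q : Set (EuclideanSpace ℝ (Fin n)), IsCompact Q →
      ∀ ε : ℝ, 0 < ε → ∃ N : ℕ, ∀ m ≥ N, ∀ x ∈ Q,
        |φ m (Real.sqrt (s m) • x) / s m - (1 + ⟪x - q₀, B₀ (x - q₀)⟫)| < ε := by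
  intro Q hQ ε hε
  exact exists_forall_ge_dist_lt_of_tendstoLocallyUniformly
    (parabolic_limit_of_tangent_hyperplanes_general hr hs hs0 hq
      (B := fun m => (B m).toContinuousLinearMap) (B₀ := B₀.toContinuousLinearMap) hB hφ) hQ hε
end

section
/- Let d ≥ 1, let K₀ ⊆ ℝ^d be a compact convex set with nonempty interior, and let K ⊆ ℝ^d be a set such that ∂K₀ ⊆ K and K ∩ int(K₀) = ∅. Suppose K is semi-convex relative to K₀, i.e. every closed segment [p, q] with endpoints p, q ∈ K and [p, q] ∩ int(K₀) = ∅ satisfies [p, q] ⊆ K. Then K₀ ∪ K is a convex subset of ℝ^d. -/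
/-!
Since `K` contains the frontier of `K₀`, the union `K₀ ∪ K` equals `U ∪ K` with `U` the interior
of `K₀`. This set is star-shaped about every `w ∈ U`: if `p ∈ K` is joined to `w`, the segment
leaves `U` at a frontier point `y`, and beyond `y` it never meets `U` again, so `[y, p] ⊆ K` by
semi-convexity. Now take a segment with endpoints in `U ∪ K`. If it avoids `U`, semi-convexity
applies directly; otherwise cut it at one of its points in `U` and use star-shapedness on both
halves.
-/

open Set

theorem isPreconnected_inter_frontier_nonempty {X : Type*} [TopologicalSpace X] {s u : Set X}
    (hs : IsPreconnected s) (hsu : (s ∩ u).Nonempty) (hnsu : ¬s ⊆ u) :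
    (s ∩ frontier u).Nonempty := by
  rw [← not_disjoint_iff_nonempty_inter]
  intro hdisj
  have hcover : s ⊆ interior u ∪ (closure u)ᶜ := fun x hx ↦ by
    by_contra hxu
    rw [mem_union, mem_compl_iff, not_or, not_not] at hxu
    exact disjoint_left.1 hdisj hx ⟨hxu.2, hxu.1⟩
  rcases hs.subset_or_subset isOpen_interior isClosed_closure.isOpen_compl
    (disjoint_compl_right.mono_left interior_subset_closure) hcover with hin | hout
  · exact hnsu (hin.trans interior_subset)
  · obtain ⟨x, hxs, hxu⟩ := hsu
    exact hout hxs (subset_closure hxu)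

theorem starConvex_disjoint_segment_of_wbtw {𝕜 E : Type*} [Field 𝕜] [LinearOrder 𝕜]
    [IsStrictOrderedRing 𝕜] [AddCommGroup E] [Module 𝕜 E] {U : Set E} {w y p : E}
    (hU : StarConvex 𝕜 w U) (hy : y ∉ U) (hwyp : Wbtw 𝕜 w y p) :
    Disjoint (segment 𝕜 y p) U := by
  refine disjoint_left.2 fun u hu huU ↦ hy ?_
  have hwyu : Wbtw 𝕜 w y u := hwyp.trans_right_left (mem_segment_iff_wbtw.1 hu)
  exact hU.segment_subset huU (mem_segment_iff_wbtw.2 hwyu)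

/-- `K` is semi-convex outside `U` if it contains every closed segment that has its endpoints in
`K` and does not meet `U`. The paper's semi-convexity relative to a body `K₀` is the case
`U = interior K₀`. -/
def SemiConvexOutside {E : Type*} [AddCommGroup E] [Module ℝ E] (U K : Set E) : Prop :=
  ∀ p ∈ K, ∀ q ∈ K, segment ℝ p q ∩ U = ∅ → segment ℝ p q ⊆ K

namespace SemiConvexOutside

variable {E : Type*} [AddCommGroup E] [Module ℝ E] [TopologicalSpace E] [ContinuousAdd E]
  [ContinuousSMul ℝ E] {U K : Set E}

theorem starConvex_union {w : E} (hK : SemiConvexOutside U K) (hUo : IsOpen U)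
    (hU : StarConvex ℝ w U) (hfr : frontier U ⊆ K) (hw : w ∈ U) :
    StarConvex ℝ w (U ∪ K) := by
  rw [starConvex_iff_segment_subset]
  intro p hp z hz
  by_cases hzU : z ∈ U
  · exact Or.inl hzU
  have hpK : p ∈ K := hp.resolve_left fun hpU ↦ hzU (hU.segment_subset hpU hz)
  obtain ⟨y, hy, hyfr⟩ : (segment ℝ w z ∩ frontier U).Nonempty :=
    isPreconnected_inter_frontier_nonempty (convex_segment w z).isPreconnected
      ⟨w, left_mem_segment ℝ w z, hw⟩ fun hsub ↦ hzU (hsub (right_mem_segment ℝ w z))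
  have hyU : y ∉ U := disjoint_left.1 (disjoint_frontier_iff_isOpen.2 hUo) hyfr
  rw [mem_segment_iff_wbtw] at hy hz
  have hyp : segment ℝ y p ∩ U = ∅ :=
    (starConvex_disjoint_segment_of_wbtw hU hyU (hz.trans_left hy)).inter_eq
  exact Or.inr (hK y (hfr hyfr) p hpK hyp (mem_segment_iff_wbtw.2 (hz.trans_left_right hy)))

theorem convex_union (hK : SemiConvexOutside U K) (hUo : IsOpen U) (hU : Convex ℝ U)
    (hfr : frontier U ⊆ K) : Convex ℝ (U ∪ K) := by
  rw [convex_iff_openSegment_subset]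
  intro p hp q hq
  rcases (segment ℝ p q ∩ U).eq_empty_or_nonempty with havoid | ⟨w, hwpq, hwU⟩
  · have hdisj : Disjoint (segment ℝ p q) U := disjoint_iff_inter_eq_empty.2 havoid
    have hpK : p ∈ K := hp.resolve_left (disjoint_left.1 hdisj (left_mem_segment ℝ p q))
    have hqK : q ∈ K := hq.resolve_left (disjoint_left.1 hdisj (right_mem_segment ℝ p q))
    exact (openSegment_subset_segment ℝ p q).trans
      ((hK p hpK q hqK havoid).trans subset_union_right)
  · have hstar : StarConvex ℝ w (U ∪ K) := hK.starConvex_union hUo (hU hwU) hfr hwU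
    have hwline : w ∈ range (AffineMap.lineMap p q : ℝ → E) := by
      rw [segment_eq_image_lineMap] at hwpq
      exact image_subset_range _ _ hwpq
    refine (openSegment_subset_union p q hwline).trans
      (insert_subset (Or.inl hwU) (union_subset ?_ (hstar.openSegment_subset hq)))
    rw [openSegment_symm]
    exact hstar.openSegment_subset hp

end SemiConvexOutside

theorem interior_union_eq_of_frontier_subset {X : Type*} [TopologicalSpace X] {s t : Set X}
    (hst : frontier s ⊆ t) : interior s ∪ t = s ∪ t := by
  refine (union_subset_union_left t interior_subset).antisymm (union_subset ?_ subset_union_right)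
  calc
    s ⊆ closure s := subset_closure
    _ = interior s ∪ frontier s := closure_eq_interior_union_frontier s
    _ ⊆ interior s ∪ t := union_subset_union_right _ hst

theorem semiconvex_union_convex_general {E : Type*} [AddCommGroup E] [Module ℝ E]
    [TopologicalSpace E] [IsTopologicalAddGroup E] [ContinuousSMul ℝ E] {K₀ K : Set E}
    (hK₀ : Convex ℝ K₀) (hfr : frontier K₀ ⊆ K) (hK : SemiConvexOutside (interior K₀) K) :
    Convex ℝ (K₀ ∪ K) := by
  rw [← interior_union_eq_of_frontier_subset hfr]
  exact hK.convex_union isOpen_interior hK₀.interior (frontier_interior_subset.trans hfr)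

/-- Let `K₀ ⊆ ℝ^d` be a compact convex set with nonempty interior,
and let `K` be a set containing `∂K₀` and disjoint from `int K₀` which is semi-convex
relative to `K₀`: every closed segment with endpoints in `K` avoiding `int K₀` lies in
`K`.  Then `K₀ ∪ K` is convex. -/
theorem semiconvex_union_convex (d : ℕ) (hd : 1 ≤ d)
    (K₀ K : Set (EuclideanSpace ℝ (Fin d)))
    (hK₀cpt : IsCompact K₀) (hK₀conv : Convex ℝ K₀) (hK₀int : (interior K₀).Nonempty)
    (hfr : frontier K₀ ⊆ K) (hdisj : K ∩ interior K₀ = ∅)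
    (hsemi : ∀ p ∈ K, ∀ q ∈ K,
      segment ℝ p q ∩ interior K₀ = ∅ → segment ℝ p q ⊆ K) :
    Convex ℝ (K₀ ∪ K) :=
  semiconvex_union_convex_general hK₀conv hfr hsemi
end
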